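/- There is an absolute constant C such that for every integer n ≥ 1, every M ≥ 0, every Lipschitz function A : ℝ → ℝ with Lipschitz constant M, and every dyadic interval J ⊆ ℝ, Σ_{I dyadic, I ⊆ J} β_n(I)² |I| ≤ C · n³ · M² · |J|, where β_n(I) := inf_{a,b ∈ ℝ} sup_{x ∈ 3nI} |A(x) − (a + b x)| / |I|. -/

import Mathlib

open MeasureTheory

/-- The dyadic interval `[2^j m, 2^j (m+1))`. -/
noncomputable def dyadicI (j m : ℤ) : Set ℝ :=
  Set.Ico ((2 : ℝ) ^ j * m) ((2 : ℝ) ^ j * (m + 1))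

/-- The `n`-th dilated Jones beta number of `A : ℝ → ℝ` on the dyadic interval `[2^j m, 2^j(m+1))`:
the infimum over affine functions `a + b x` of the supremum of `|A x - (a + b x)|` over the
interval with the same center and `3n` times the length, normalized by the length `2^j`. -/
noncomputable def jonesBeta (n : ℕ) (A : ℝ → ℝ) (j m : ℤ) : ℝ :=
  ⨅ ab : ℝ × ℝ,
    (⨆ x ∈ Set.Icc ((2 : ℝ) ^ j * ((m : ℝ) + 1 / 2) - 3 * n * (2 : ℝ) ^ j / 2)
        ((2 : ℝ) ^ j * ((m : ℝ) + 1 / 2) + 3 * n * (2 : ℝ) ^ j / 2),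
      |A x - (ab.1 + ab.2 * x)|) / (2 : ℝ) ^ j

/-- The maximal deviation of `f` on `[a, b]` from its chord over `[a, b]`. -/
noncomputable def chordDev (f : ℝ → ℝ) (a b : ℝ) : ℝ :=
  sSup ((fun x => |f x - (f a + (f b - f a) / (b - a) * (x - a))|) '' Set.Icc a b)

theorem chordDev_nonneg (f : ℝ → ℝ) (a b : ℝ) : 0 ≤ chordDev f a b := by
  apply Real.sSup_nonneg
  rintro _ ⟨x, _, rfl⟩
  exact abs_nonneg _

theorem abs_sub_chord_le {f : ℝ → ℝ} {K : ℝ} (hf : ∀ x y, |f x - f y| ≤ K * |x - y|)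
    {a b x : ℝ} (hab : a < b) (hx : x ∈ Set.Icc a b) :
    |f x - (f a + (f b - f a) / (b - a) * (x - a))| ≤ 2 * K * (b - a) := by
  have hba : 0 < b - a := sub_pos.2 hab
  have h1 := hf x a
  have h2 := hf b a
  have hK : 0 ≤ K := by
    have := (abs_nonneg _).trans h2
    rw [abs_of_pos hba] at this
    exact nonneg_of_mul_nonneg_left this hba
  rw [abs_of_nonneg (sub_nonneg.2 hx.1)] at h1
  rw [abs_of_pos hba] at h2
  have h3 : |(f b - f a) / (b - a) * (x - a)| ≤ K * (b - a) := by
    rw [abs_mul, abs_div, abs_of_pos hba, abs_of_nonneg (sub_nonneg.2 hx.1)]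
    have h4 : |f b - f a| / (b - a) ≤ K := by rwa [div_le_iff₀ hba]
    have h5 : x - a ≤ b - a := by linarith [hx.2]
    exact mul_le_mul h4 h5 (sub_nonneg.2 hx.1) hK
  have h6 : K * (x - a) ≤ K * (b - a) :=
    mul_le_mul_of_nonneg_left (by linarith [hx.2]) hK
  rw [abs_le] at *
  constructor <;> linarith [h1.1, h1.2, h3.1, h3.2]

theorem abs_sub_chord_le_chordDev {f : ℝ → ℝ} {K : ℝ}
    (hf : ∀ x y, |f x - f y| ≤ K * |x - y|) {a b x : ℝ} (hab : a < b) (hx : x ∈ Set.Icc a b) :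
    |f x - (f a + (f b - f a) / (b - a) * (x - a))| ≤ chordDev f a b := by
  refine le_csSup ⟨2 * K * (b - a), ?_⟩ ⟨x, hx, rfl⟩
  rintro _ ⟨y, hy, rfl⟩
  exact abs_sub_chord_le hf hab hy

theorem chordDev_le {f : ℝ → ℝ} {a b c : ℝ} (hab : a < b)
    (h : ∀ x ∈ Set.Icc a b, |f x - (f a + (f b - f a) / (b - a) * (x - a))| ≤ c) :
    chordDev f a b ≤ c := by
  refine csSup_le ((Set.nonempty_Icc.2 hab.le).image _) ?_
  rintro _ ⟨x, hx, rfl⟩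
  exact h x hx

theorem chordDev_le_midpoint {f : ℝ → ℝ} {K : ℝ} (hf : ∀ x y, |f x - f y| ≤ K * |x - y|)
    {a m b : ℝ} (ham : a < m) (hm : m - a = b - m) :
    chordDev f a b ≤ |f m - (f a + f b) / 2| + max (chordDev f a m) (chordDev f m b) := by
  have hmb : m < b := by linarith
  have hba : b - a = 2 * (m - a) := by linarith
  have hpos : 0 < m - a := sub_pos.2 ham
  refine chordDev_le (ham.trans hmb) fun x hx => ?_
  rcases le_total x m with hxm | hxm
  · have h1 := abs_sub_chord_le_chordDev hf ham ⟨hx.1, hxm⟩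
    have key : f x - (f a + (f b - f a) / (b - a) * (x - a)) =
        (f x - (f a + (f m - f a) / (m - a) * (x - a))) +
          (f m - (f a + f b) / 2) * ((x - a) / (m - a)) := by
      rw [hba]; field_simp; ring
    have h2 : |(f m - (f a + f b) / 2) * ((x - a) / (m - a))| ≤ |f m - (f a + f b) / 2| := by
      rw [abs_mul]
      refine mul_le_of_le_one_right (abs_nonneg _) ?_
      rw [abs_of_nonneg (div_nonneg (sub_nonneg.2 hx.1) hpos.le), div_le_one hpos]
      linarith
    rw [key]
    linarith [abs_add_le (f x - (f a + (f m - f a) / (m - a) * (x - a)))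
      ((f m - (f a + f b) / 2) * ((x - a) / (m - a))),
      le_max_left (chordDev f a m) (chordDev f m b)]
  · have h1 := abs_sub_chord_le_chordDev hf hmb ⟨hxm, hx.2⟩
    have key : f x - (f a + (f b - f a) / (b - a) * (x - a)) =
        (f x - (f m + (f b - f m) / (b - m) * (x - m))) +
          (f m - (f a + f b) / 2) * ((b - x) / (m - a)) := by
      obtain rfl : b = 2 * m - a := by linarith
      have e1 : 2 * m - a - a = 2 * (m - a) := by ring
      have e2 : 2 * m - a - m = m - a := by ring
      rw [e1, e2]; field_simp; ring
    have h2 : |(f m - (f a + f b) / 2) * ((b - x) / (m - a))| ≤ |f m - (f a + f b) / 2| := by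
      rw [abs_mul]
      refine mul_le_of_le_one_right (abs_nonneg _) ?_
      rw [abs_of_nonneg (div_nonneg (sub_nonneg.2 hx.2) hpos.le), div_le_one hpos]
      linarith
    rw [key]
    linarith [abs_add_le (f x - (f m + (f b - f m) / (b - m) * (x - m)))
      ((f m - (f a + f b) / 2) * ((b - x) / (m - a))),
      le_max_right (chordDev f a m) (chordDev f m b)]

theorem sum_range_two_mul (g : ℕ → ℝ) (m : ℕ) :
    ∑ i ∈ Finset.range (2 * m), g i = ∑ i ∈ Finset.range m, (g (2 * i) + g (2 * i + 1)) := by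
  induction m with
  | zero => simp
  | succ m ih =>
    rw [Finset.sum_range_succ, ← ih, show 2 * (m + 1) = 2 * m + 1 + 1 by ring,
      Finset.sum_range_succ, Finset.sum_range_succ, add_assoc]

/-- The deviation of `f` from its chord on the dyadic interval `[i / 2^k, (i + 1) / 2^k]`. -/
noncomputable def dyadicDev (f : ℝ → ℝ) (k i : ℕ) : ℝ :=
  chordDev f (i / 2 ^ k) ((i + 1) / 2 ^ k)

/-- The distance of `f` from its chord at the midpoint of `[i / 2^k, (i + 1) / 2^k]`. -/
noncomputable def midDev (f : ℝ → ℝ) (k i : ℕ) : ℝ :=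
  |f ((2 * i + 1) / 2 ^ (k + 1)) - (f (i / 2 ^ k) + f ((i + 1) / 2 ^ k)) / 2|

theorem sum_sq_increment_succ (f : ℝ → ℝ) (k : ℕ) :
    2 ^ (k + 1) * ∑ i ∈ Finset.range (2 ^ (k + 1)),
        (f ((i + 1) / 2 ^ (k + 1)) - f (i / 2 ^ (k + 1))) ^ 2 =
      2 ^ k * ∑ i ∈ Finset.range (2 ^ k), (f ((i + 1) / 2 ^ k) - f (i / 2 ^ k)) ^ 2 +
        4 * (2 ^ k * ∑ i ∈ Finset.range (2 ^ k), midDev f k i ^ 2) := by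
  rw [pow_succ' (2 : ℝ) k, pow_succ' (2 : ℕ) k, sum_range_two_mul, Finset.mul_sum, Finset.mul_sum, Finset.mul_sum,
    Finset.mul_sum, ← Finset.sum_add_distrib]
  refine Finset.sum_congr rfl fun i _ => ?_
  have e1 : (((2 * i : ℕ) : ℝ)) / (2 * 2 ^ k) = i / 2 ^ k := by push_cast; field_simp
  have e2 : ((2 * i + 1 : ℕ) + 1 : ℝ) / (2 * 2 ^ k) = (i + 1) / 2 ^ k := by
    push_cast; field_simp; ring
  have e3 : ((2 * i + 1 : ℕ) : ℝ) / (2 * 2 ^ k) = (2 * i + 1) / 2 ^ (k + 1) := by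
    push_cast; rw [pow_succ']
  have e4 : (((2 * i : ℕ) : ℝ) + 1) / (2 * 2 ^ k) = (2 * i + 1) / 2 ^ (k + 1) := by
    push_cast; rw [pow_succ']
  rw [e1, e2, e3, e4, midDev, sq_abs]
  ring

theorem sum_sq_midDev_le {f : ℝ → ℝ} {K : ℝ} (hf : ∀ x y, |f x - f y| ≤ K * |x - y|) (m : ℕ) :
    4 * ∑ k ∈ Finset.range m, 2 ^ k * ∑ i ∈ Finset.range (2 ^ k), midDev f k i ^ 2 ≤ K ^ 2 := by
  have tel : ∀ m : ℕ, 4 * ∑ k ∈ Finset.range m,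
      2 ^ k * ∑ i ∈ Finset.range (2 ^ k), midDev f k i ^ 2 ≤
      2 ^ m * ∑ i ∈ Finset.range (2 ^ m), (f ((i + 1) / 2 ^ m) - f (i / 2 ^ m)) ^ 2 := by
    intro m
    induction m with
    | zero => simp; positivity
    | succ m ih =>
      rw [Finset.sum_range_succ, mul_add, sum_sq_increment_succ]
      linarith
  refine (tel m).trans ?_
  have h : ∀ i ∈ Finset.range (2 ^ m),
      (f ((i + 1) / 2 ^ m) - f (i / 2 ^ m)) ^ 2 ≤ (K / 2 ^ m) ^ 2 := by
    intro i _
    rw [← sq_abs]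
    refine pow_le_pow_left₀ (abs_nonneg _) ((hf _ _).trans_eq ?_) 2
    rw [← sub_div, add_sub_cancel_left, abs_of_pos (by positivity)]
    ring
  have := Finset.sum_le_sum h
  rw [Finset.sum_const, Finset.card_range, nsmul_eq_mul] at this
  calc _ ≤ (2 : ℝ) ^ m * (((2 ^ m : ℕ) : ℝ) * (K / 2 ^ m) ^ 2) := by gcongr
    _ = K ^ 2 := by push_cast; field_simp

theorem dyadicDev_sq_le {f : ℝ → ℝ} {K : ℝ} (hf : ∀ x y, |f x - f y| ≤ K * |x - y|) (k i : ℕ) :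
    dyadicDev f k i ^ 2 ≤ 3 * midDev f k i ^ 2 +
      3 / 2 * (dyadicDev f (k + 1) (2 * i) ^ 2 + dyadicDev f (k + 1) (2 * i + 1) ^ 2) := by
  have h := chordDev_le_midpoint hf (a := i / 2 ^ k) (m := (2 * i + 1) / 2 ^ (k + 1))
    (b := (i + 1) / 2 ^ k)
    (by rw [pow_succ', div_lt_div_iff₀ (by positivity) (by positivity)]
        nlinarith [show (0 : ℝ) < 2 ^ k by positivity])
    (by rw [pow_succ']; field_simp; ring)
  have e1 : (((2 * i : ℕ) : ℝ)) / 2 ^ (k + 1) = i / 2 ^ k := by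
    rw [pow_succ']; push_cast; field_simp
  have e2 : ((2 * i + 1 : ℕ) + 1 : ℝ) / 2 ^ (k + 1) = (i + 1) / 2 ^ k := by
    rw [pow_succ']; push_cast; field_simp; ring
  have e3 : ((2 * i + 1 : ℕ) : ℝ) / 2 ^ (k + 1) = (2 * i + 1) / 2 ^ (k + 1) := by
    push_cast; rfl
  have e4 : (((2 * i : ℕ) : ℝ) + 1) / 2 ^ (k + 1) = (2 * i + 1) / 2 ^ (k + 1) := by
    push_cast; rfl
  have h0 : 0 ≤ dyadicDev f k i := chordDev_nonneg _ _ _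
  have h1 : dyadicDev f k i ≤ midDev f k i +
      max (dyadicDev f (k + 1) (2 * i)) (dyadicDev f (k + 1) (2 * i + 1)) := by
    simpa only [dyadicDev, midDev, e1, e2, e3, e4] using h
  have h2 := pow_le_pow_left₀ h0 h1 2
  have h3 : max (dyadicDev f (k + 1) (2 * i)) (dyadicDev f (k + 1) (2 * i + 1)) ^ 2 ≤
      dyadicDev f (k + 1) (2 * i) ^ 2 + dyadicDev f (k + 1) (2 * i + 1) ^ 2 := by
    rcases max_choice (dyadicDev f (k + 1) (2 * i)) (dyadicDev f (k + 1) (2 * i + 1)) with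
      h | h <;> rw [h] <;> nlinarith [sq_nonneg (dyadicDev f (k + 1) (2 * i)),
        sq_nonneg (dyadicDev f (k + 1) (2 * i + 1))]
  set B := max (dyadicDev f (k + 1) (2 * i)) (dyadicDev f (k + 1) (2 * i + 1))
  nlinarith [sq_nonneg (2 * midDev f k i - B)]

theorem scaled_sum_sq_dyadicDev_le {f : ℝ → ℝ} {K : ℝ}
    (hf : ∀ x y, |f x - f y| ≤ K * |x - y|) (k : ℕ) :
    2 ^ k * ∑ i ∈ Finset.range (2 ^ k), dyadicDev f k i ^ 2 ≤ 4 * K ^ 2 := by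
  have h : ∀ i ∈ Finset.range (2 ^ k), dyadicDev f k i ^ 2 ≤ (2 * K / 2 ^ k) ^ 2 := by
    intro i _
    have hlt : (i : ℝ) / 2 ^ k < (i + 1) / 2 ^ k := by gcongr; linarith
    refine pow_le_pow_left₀ (chordDev_nonneg _ _ _) ?_ 2
    refine (chordDev_le hlt fun x hx => abs_sub_chord_le hf hlt hx).trans_eq ?_
    rw [← sub_div, add_sub_cancel_left]
    ring
  have := Finset.sum_le_sum h
  rw [Finset.sum_const, Finset.card_range, nsmul_eq_mul] at this
  calc _ ≤ (2 : ℝ) ^ k * (((2 ^ k : ℕ) : ℝ) * (2 * K / 2 ^ k) ^ 2) := by gcongr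
    _ = 4 * K ^ 2 := by push_cast; field_simp; ring

/-- Carleson packing for the deviations of a Lipschitz function from its dyadic chords. -/
theorem sum_sq_dyadicDev_le {f : ℝ → ℝ} {K : ℝ} (hf : ∀ x y, |f x - f y| ≤ K * |x - y|) (m : ℕ) :
    ∑ k ∈ Finset.range m, 2 ^ k * ∑ i ∈ Finset.range (2 ^ k), dyadicDev f k i ^ 2 ≤
      15 * K ^ 2 := by
  set T : ℕ → ℝ := fun k => 2 ^ k * ∑ i ∈ Finset.range (2 ^ k), dyadicDev f k i ^ 2 with hT
  set D : ℕ → ℝ := fun k => 2 ^ k * ∑ i ∈ Finset.range (2 ^ k), midDev f k i ^ 2 with hD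
  have hstep : ∀ k, T k ≤ 3 * D k + 3 / 4 * T (k + 1) := by
    intro k
    have h := Finset.sum_le_sum fun i (_ : i ∈ Finset.range (2 ^ k)) => dyadicDev_sq_le hf k i
    rw [Finset.sum_add_distrib, ← Finset.mul_sum, ← Finset.mul_sum,
      ← sum_range_two_mul (fun i => dyadicDev f (k + 1) i ^ 2), ← pow_succ'] at h
    have h2 := mul_le_mul_of_nonneg_left h (show (0 : ℝ) ≤ 2 ^ k by positivity)
    simp only [hT, hD]
    rw [pow_succ' (2 : ℝ) k]
    linarith
  have h1 : ∑ k ∈ Finset.range m, T k ≤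
      3 * ∑ k ∈ Finset.range m, D k + 3 / 4 * ∑ k ∈ Finset.range m, T (k + 1) := by
    rw [Finset.mul_sum, Finset.mul_sum, ← Finset.sum_add_distrib]
    exact Finset.sum_le_sum fun k _ => hstep k
  have h2 : ∑ k ∈ Finset.range m, T (k + 1) + T 0 = ∑ k ∈ Finset.range m, T k + T m := by
    rw [← Finset.sum_range_succ', Finset.sum_range_succ]
  have h3 : T m ≤ 4 * K ^ 2 := scaled_sum_sq_dyadicDev_le hf m
  have h4 : 0 ≤ T 0 := by simp only [hT]; positivity
  have h5 : 4 * ∑ k ∈ Finset.range m, D k ≤ K ^ 2 := sum_sq_midDev_le hf m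
  linarith

theorem jonesBeta_nonneg (n : ℕ) (A : ℝ → ℝ) (j m : ℤ) : 0 ≤ jonesBeta n A j m := by
  refine Real.iInf_nonneg fun ab => div_nonneg ?_ (by positivity)
  exact Real.iSup_nonneg fun x => Real.iSup_nonneg fun _ => abs_nonneg _

theorem jonesBeta_le {n : ℕ} {A : ℝ → ℝ} {j m : ℤ} {a b E : ℝ} (hE : 0 ≤ E)
    (h : ∀ x ∈ Set.Icc ((2 : ℝ) ^ j * ((m : ℝ) + 1 / 2) - 3 * n * (2 : ℝ) ^ j / 2)
        ((2 : ℝ) ^ j * ((m : ℝ) + 1 / 2) + 3 * n * (2 : ℝ) ^ j / 2), |A x - (a + b * x)| ≤ E) :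
    jonesBeta n A j m ≤ E / (2 : ℝ) ^ j := by
  refine (ciInf_le ⟨0, ?_⟩ (a, b)).trans ?_
  · rintro _ ⟨ab, rfl⟩
    refine div_nonneg ?_ (by positivity)
    exact Real.iSup_nonneg fun x => Real.iSup_nonneg fun _ => abs_nonneg _
  · gcongr
    exact Real.iSup_le (fun x => Real.iSup_le (h x) hE) hE

/-- If the dilate `3nI` of the `r`-th dyadic subinterval `I` of generation `p` of
`J = [2^jJ mJ, 2^jJ (mJ + 1))` lies in the `i`-th cell of generation `p` of the interval
`2^jJ [mJ - c, mJ - c + 9n)`, then `β_n(I)` is controlled by the chord deviation of the rescaled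
function on that cell. -/
theorem jonesBeta_le_dyadicDev {n : ℕ} (hn : 1 ≤ n) {A : ℝ → ℝ} {jJ mJ : ℤ} {c K : ℝ} {p r i : ℕ}
    (hK : ∀ x y, |A (2 ^ jJ * (mJ - c + 9 * n * x)) - A (2 ^ jJ * (mJ - c + 9 * n * y))| ≤
      K * |x - y|)
    (h1 : 18 * n * i + 3 * n ≤ 2 * (r + c * 2 ^ p) + 1)
    (h2 : 2 * (r + c * 2 ^ p) + 1 + 3 * n ≤ 18 * n * (i + 1)) :
    jonesBeta n A (jJ - p) (2 ^ p * mJ + r) ≤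
      dyadicDev (fun y => A (2 ^ jJ * (mJ - c + 9 * n * y))) p i / 2 ^ (jJ - p : ℤ) := by
  set f : ℝ → ℝ := fun y => A (2 ^ jJ * (mJ - c + 9 * n * y)) with hf
  have hn' : (0 : ℝ) < n := by exact_mod_cast hn
  have hJ : (0 : ℝ) < 2 ^ jJ := by positivity
  have hp : (0 : ℝ) < 2 ^ p := by positivity
  have hj : (2 : ℝ) ^ (jJ - p : ℤ) = 2 ^ jJ / 2 ^ p := by
    rw [zpow_sub₀ two_ne_zero, zpow_natCast]
  have hlt : (i : ℝ) / 2 ^ p < (i + 1) / 2 ^ p := by gcongr; linarith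
  set S : ℝ := (f ((i + 1) / 2 ^ p) - f (i / 2 ^ p)) / ((i + 1) / 2 ^ p - i / 2 ^ p) with hS
  refine jonesBeta_le (a := f (i / 2 ^ p) + S * ((c - mJ) / (9 * n) - i / 2 ^ p))
    (b := S / (2 ^ jJ * (9 * n))) (chordDev_nonneg _ _ _) fun x hx => ?_
  set y : ℝ := (x / 2 ^ jJ - mJ + c) / (9 * n) with hy
  have hfy : f y = A x := by
    simp only [hf, hy]
    congr 1
    field_simp
    ring
  obtain ⟨w, hw⟩ : ∃ w, x = 2 ^ jJ / 2 ^ p * w :=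
    ⟨x / (2 ^ jJ / 2 ^ p), by field_simp⟩
  have hx1 : 2 ^ p * mJ + r + 1 / 2 - 3 * n / 2 ≤ w := by
    have := hx.1
    rw [hj, hw] at this
    push_cast at this
    refine le_of_mul_le_mul_left (a := (2 : ℝ) ^ jJ / 2 ^ p) ?_ (by positivity)
    linarith
  have hx2 : w ≤ 2 ^ p * mJ + r + 1 / 2 + 3 * n / 2 := by
    have := hx.2
    rw [hj, hw] at this
    push_cast at this
    refine le_of_mul_le_mul_left (a := (2 : ℝ) ^ jJ / 2 ^ p) ?_ (by positivity)
    linarith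
  have hyw : y = (w - 2 ^ p * mJ + c * 2 ^ p) / (9 * n) / 2 ^ p := by
    rw [hy, hw]
    field_simp
  have hyI : y ∈ Set.Icc ((i : ℝ) / 2 ^ p) ((i + 1) / 2 ^ p) := by
    rw [hyw]
    constructor
    · gcongr
      rw [le_div_iff₀ (by positivity)]
      linarith
    · gcongr
      rw [div_le_iff₀ (by positivity)]
      linarith
  have := abs_sub_chord_le_chordDev hK hlt hyI
  change |f y - (f (i / 2 ^ p) + S * (y - i / 2 ^ p))| ≤ dyadicDev f p i at this
  rw [hfy] at this
  convert this using 2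
  rw [hy]
  field_simp
  ring

/-- Two grids of mesh `9n` shifted against each other by `3n * 2^p`, which is at distance at least
`3n` from the multiples of `9n`: every interval of length `3n` centered at `r + 1/2` lies in a cell
of one of them. -/
theorem exists_cell {n : ℕ} (hn : 1 ≤ n) (p r : ℕ) :
    (18 * n * ((r + 3 * n * 2 ^ p) / (9 * n)) + 3 * n ≤ 2 * (r + 3 * n * 2 ^ p) + 1 ∧
      2 * (r + 3 * n * 2 ^ p) + 1 + 3 * n ≤ 18 * n * ((r + 3 * n * 2 ^ p) / (9 * n) + 1)) ∨
    (18 * n * ((r + 6 * n * 2 ^ p) / (9 * n)) + 3 * n ≤ 2 * (r + 6 * n * 2 ^ p) + 1 ∧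
      2 * (r + 6 * n * 2 ^ p) + 1 + 3 * n ≤ 18 * n * ((r + 6 * n * 2 ^ p) / (9 * n) + 1)) := by
  have h3 : 2 ^ p % 3 = 1 ∨ 2 ^ p % 3 = 2 := by
    induction p with
    | zero => simp
    | succ p ih => rw [pow_succ]; omega
  generalize 2 ^ p = P at *
  have ha := Nat.div_add_mod (r + 3 * n * P) (9 * n)
  have hb := Nat.div_add_mod (r + 6 * n * P) (9 * n)
  have ha' := Nat.mod_lt (r + 3 * n * P) (show 0 < 9 * n by omega)
  have hb' := Nat.mod_lt (r + 6 * n * P) (show 0 < 9 * n by omega)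
  generalize (r + 3 * n * P) / (9 * n) = i at *
  generalize (r + 6 * n * P) / (9 * n) = i' at *
  generalize (r + 3 * n * P) % (9 * n) = ρ at *
  generalize (r + 6 * n * P) % (9 * n) = ρ' at *
  rw [← ha, ← hb]
  obtain ⟨k, hk⟩ : ∃ k : ℤ, k = 3 * (i - i') + P := ⟨_, rfl⟩
  have hρ : (ρ' : ℤ) = ρ + 3 * n * k := by
    rw [hk]
    zify at ha hb
    linear_combination hb - ha
  have hk1 : k < 3 := by by_contra! h; nlinarith
  have hk2 : -3 < k := by by_contra! h; nlinarith
  have hk3 : k % 3 ≠ 0 := by omega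
  have hcases : (3 * n ≤ 2 * ρ + 1 ∧ 2 * ρ + 1 + 3 * n ≤ 18 * n) ∨
      (3 * n ≤ 2 * ρ' + 1 ∧ 2 * ρ' + 1 + 3 * n ≤ 18 * n) := by
    clear ha hb hk
    interval_cases k <;> omega
  rcases hcases with ⟨h1, h2⟩ | ⟨h1, h2⟩
  · exact Or.inl ⟨by linarith, by linarith⟩
  · exact Or.inr ⟨by linarith, by linarith⟩

theorem sum_range_div_le {g : ℕ → ℝ} (hg : ∀ i, 0 ≤ g i) {q c P Q : ℕ} (hq : 0 < q)
    (hP : P + c ≤ q * Q) :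
    ∑ r ∈ Finset.range P, g ((r + c) / q) ≤ q * ∑ i ∈ Finset.range Q, g i := by
  have hmaps : ∀ r ∈ Finset.range P, (r + c) / q ∈ Finset.range Q := by
    intro r hr
    rw [Finset.mem_range] at *
    rw [Nat.div_lt_iff_lt_mul hq, mul_comm]
    omega
  rw [← Finset.sum_fiberwise_of_maps_to hmaps, Finset.mul_sum]
  refine Finset.sum_le_sum fun i _ => ?_
  rw [Finset.sum_congr rfl (g := fun _ => g i)
    fun r hr => by rw [(Finset.mem_filter.1 hr).2], Finset.sum_const, nsmul_eq_mul]
  refine mul_le_mul_of_nonneg_right ?_ (hg i)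
  have hinj : ((Finset.range P).filter fun r => (r + c) / q = i).card ≤ (Finset.range q).card := by
    refine Finset.card_le_card_of_injOn (fun r => (r + c) % q)
      (fun r _ => Finset.mem_coe.2 (Finset.mem_range.2 (Nat.mod_lt _ hq))) ?_
    intro r hr r' hr' h
    have h1 := (Finset.mem_filter.1 (Finset.mem_coe.1 hr)).2
    have h2 := (Finset.mem_filter.1 (Finset.mem_coe.1 hr')).2
    have h3 := Nat.div_add_mod (r + c) q
    have h4 := Nat.div_add_mod (r' + c) q
    simp only at h
    rw [h1, h] at h3
    rw [h2] at h4
    omega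
  rw [Finset.card_range] at hinj
  exact_mod_cast hinj

theorem sum_generation_le {n : ℕ} (hn : 1 ≤ n) {A : ℝ → ℝ} {jJ mJ : ℤ} {K : ℝ}
    {f : ℕ → ℝ → ℝ} (hfA : ∀ c, f c = fun y => A (2 ^ jJ * (mJ - c + 9 * n * y)))
    (hK : ∀ c x y, |f c x - f c y| ≤ K * |x - y|) (p : ℕ) :
    ∑ r ∈ Finset.range (2 ^ p),
        jonesBeta n A (jJ - p) (2 ^ p * mJ + r) ^ 2 * (2 : ℝ) ^ (jJ - p : ℤ) ≤
      9 * n / 2 ^ jJ * (2 ^ p * ∑ i ∈ Finset.range (2 ^ p), dyadicDev (f (3 * n)) p i ^ 2 +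
        2 ^ p * ∑ i ∈ Finset.range (2 ^ p), dyadicDev (f (6 * n)) p i ^ 2) := by
  have hJ : (0 : ℝ) < 2 ^ jJ := by positivity
  have hj : (2 : ℝ) ^ (jJ - p : ℤ) = 2 ^ jJ / 2 ^ p := by
    rw [zpow_sub₀ two_ne_zero, zpow_natCast]
  have hcell : ∀ c r i : ℕ, 18 * n * i + 3 * n ≤ 2 * (r + c * 2 ^ p) + 1 →
      2 * (r + c * 2 ^ p) + 1 + 3 * n ≤ 18 * n * (i + 1) →
      jonesBeta n A (jJ - p) (2 ^ p * mJ + r) ^ 2 * (2 : ℝ) ^ (jJ - p : ℤ) ≤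
        2 ^ p / 2 ^ jJ * dyadicDev (f c) p i ^ 2 := by
    intro c r i h1 h2
    have hKc := hK c
    rw [hfA c] at hKc ⊢
    have h := pow_le_pow_left₀ (jonesBeta_nonneg _ _ _ _)
      (jonesBeta_le_dyadicDev (p := p) (r := r) (i := i) hn hKc
        (by exact_mod_cast h1) (by exact_mod_cast h2)) 2
    refine (mul_le_mul_of_nonneg_right h (by positivity)).trans_eq ?_
    rw [hj]
    field_simp
  have hterm : ∀ r ∈ Finset.range (2 ^ p),
      jonesBeta n A (jJ - p) (2 ^ p * mJ + r) ^ 2 * (2 : ℝ) ^ (jJ - p : ℤ) ≤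
        2 ^ p / 2 ^ jJ * (dyadicDev (f (3 * n)) p ((r + 3 * n * 2 ^ p) / (9 * n)) ^ 2 +
          dyadicDev (f (6 * n)) p ((r + 6 * n * 2 ^ p) / (9 * n)) ^ 2) := by
    intro r _
    rw [mul_add]
    rcases exists_cell hn p r with h | h
    · exact (hcell _ r _ h.1 h.2).trans (le_add_of_nonneg_right (by positivity))
    · exact (hcell _ r _ h.1 h.2).trans (le_add_of_nonneg_left (by positivity))
  refine (Finset.sum_le_sum hterm).trans ?_
  rw [← Finset.mul_sum, Finset.sum_add_distrib]
  have hpn : 2 ^ p ≤ n * 2 ^ p := Nat.le_mul_of_pos_left _ hn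
  have hs1 := sum_range_div_le (g := fun i => dyadicDev (f (3 * n)) p i ^ 2)
    (fun i => sq_nonneg _) (q := 9 * n) (c := 3 * n * 2 ^ p) (P := 2 ^ p) (Q := 2 ^ p)
    (by omega) (by rw [mul_assoc 3, mul_assoc 9]; omega)
  have hs2 := sum_range_div_le (g := fun i => dyadicDev (f (6 * n)) p i ^ 2)
    (fun i => sq_nonneg _) (q := 9 * n) (c := 6 * n * 2 ^ p) (P := 2 ^ p) (Q := 2 ^ p)
    (by omega) (by rw [mul_assoc 6, mul_assoc 9]; omega)
  push_cast at hs1 hs2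
  refine (mul_le_mul_of_nonneg_left (add_le_add hs1 hs2) (by positivity)).trans_eq ?_
  ring

theorem sum_jonesBeta_le {n : ℕ} (hn : 1 ≤ n) {M : ℝ} (hM : 0 ≤ M) {A : ℝ → ℝ}
    (hA : LipschitzWith (Real.toNNReal M) A) (jJ mJ : ℤ) (N : ℕ) :
    ∑ p ∈ Finset.range N, ∑ r ∈ Finset.range (2 ^ p),
        jonesBeta n A (jJ - p) (2 ^ p * mJ + r) ^ 2 * (2 : ℝ) ^ (jJ - p : ℤ) ≤
      21870 * n ^ 3 * M ^ 2 * (2 : ℝ) ^ jJ := by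
  have hJ : (0 : ℝ) < 2 ^ jJ := by positivity
  set f : ℕ → ℝ → ℝ := fun c y => A (2 ^ jJ * (mJ - c + 9 * n * y)) with hf
  have hK : ∀ c x y, |f c x - f c y| ≤ (9 * n * 2 ^ jJ * M) * |x - y| := by
    intro c x y
    have h := hA.dist_le_mul (2 ^ jJ * (mJ - c + 9 * n * x)) (2 ^ jJ * (mJ - c + 9 * n * y))
    rw [Real.dist_eq, Real.dist_eq, Real.coe_toNNReal _ hM] at h
    refine h.trans_eq ?_
    rw [show (2 : ℝ) ^ jJ * (mJ - c + 9 * n * x) - 2 ^ jJ * (mJ - c + 9 * n * y) =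
      (9 * n * 2 ^ jJ) * (x - y) by ring, abs_mul, abs_of_nonneg (by positivity)]
    ring
  refine (Finset.sum_le_sum fun p _ => sum_generation_le hn (fun c => rfl) hK p).trans ?_
  rw [← Finset.mul_sum, Finset.sum_add_distrib]
  refine (mul_le_mul_of_nonneg_left (add_le_add (sum_sq_dyadicDev_le (hK (3 * n)) N)
    (sum_sq_dyadicDev_le (hK (6 * n)) N)) (by positivity)).trans_eq ?_
  field_simp
  ring

theorem exists_eq_of_dyadicI_subset {j m jJ mJ : ℤ} (h : dyadicI j m ⊆ dyadicI jJ mJ) :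
    ∃ p r : ℕ, r < 2 ^ p ∧ j = jJ - p ∧ m = 2 ^ p * mJ + r := by
  have hj : (0 : ℝ) < 2 ^ j := by positivity
  obtain ⟨h1, h2⟩ := (Set.Ico_subset_Ico_iff (by nlinarith)).1 h
  have hle : j ≤ jJ := (zpow_le_zpow_iff_right₀ one_lt_two).1 (by linarith : (2 : ℝ) ^ j ≤ 2 ^ jJ)
  obtain ⟨p, hp⟩ := Int.eq_ofNat_of_zero_le (sub_nonneg.2 hle)
  obtain rfl : jJ = j + p := by linarith
  rw [zpow_add₀ two_ne_zero, zpow_natCast, mul_assoc] at h1 h2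
  have h1' := le_of_mul_le_mul_left h1 hj
  have h2' := le_of_mul_le_mul_left h2 hj
  have h3 : 2 ^ p * mJ ≤ m := by exact_mod_cast h1'
  have h4 : m + 1 ≤ 2 ^ p * (mJ + 1) := by exact_mod_cast h2'
  obtain ⟨r, hr⟩ := Int.eq_ofNat_of_zero_le (sub_nonneg.2 h3)
  refine ⟨p, r, ?_, by ring, by linarith⟩
  zify
  linarith

/-- Carleson packing condition, with polynomial growth `n³`, for the dilated Jones beta numbers
of a Lipschitz function. -/
theorem stmt14 : ∃ C : ℝ, 0 < C ∧ ∀ n : ℕ, 1 ≤ n → ∀ M : ℝ, 0 ≤ M → ∀ A : ℝ → ℝ,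
    LipschitzWith (Real.toNNReal M) A → ∀ jJ mJ : ℤ,
    ∑' I : {q : ℤ × ℤ // dyadicI q.1 q.2 ⊆ dyadicI jJ mJ},
        ENNReal.ofReal (jonesBeta n A I.1.1 I.1.2 ^ 2 * (2 : ℝ) ^ I.1.1) ≤
      ENNReal.ofReal (C * n ^ 3 * M ^ 2 * (2 : ℝ) ^ jJ) := by
  refine ⟨21870, by norm_num, fun n hn M hM A hA jJ mJ => ?_⟩
  choose p r hr hj hm using
    fun I : {q : ℤ × ℤ // dyadicI q.1 q.2 ⊆ dyadicI jJ mJ} => exists_eq_of_dyadicI_subset I.2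
  set g : ℕ → ℕ → ℝ := fun p r =>
    jonesBeta n A (jJ - p) (2 ^ p * mJ + r) ^ 2 * (2 : ℝ) ^ (jJ - p : ℤ) with hg
  have hg0 : ∀ p r, 0 ≤ g p r := fun p r => by positivity
  set G : ℕ × ℕ → ENNReal := fun x =>
    if x.2 ∈ Finset.range (2 ^ x.1) then ENNReal.ofReal (g x.1 x.2) else 0 with hG
  have hinj : Function.Injective fun I => (p I, r I) := by
    intro I I' h
    obtain ⟨h1, h2⟩ := Prod.ext_iff.1 h
    simp only at h1 h2
    refine Subtype.ext (Prod.ext ?_ ?_)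
    · rw [hj, hj I', h1]
    · rw [hm, hm I', h1, h2]
  calc ∑' I : {q : ℤ × ℤ // dyadicI q.1 q.2 ⊆ dyadicI jJ mJ},
        ENNReal.ofReal (jonesBeta n A I.1.1 I.1.2 ^ 2 * (2 : ℝ) ^ I.1.1)
      = ∑' I, G (p I, r I) := by
        refine tsum_congr fun I => ?_
        simp only [hG, hg, Finset.mem_range, hr I, if_true]
        rw [← hj I, ← hm I]
    _ ≤ ∑' x, G x := ENNReal.tsum_comp_le_tsum_of_injective hinj G
    _ = ∑' p, ∑' r, G (p, r) := ENNReal.tsum_prod'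
    _ = ∑' p, ENNReal.ofReal (∑ r ∈ Finset.range (2 ^ p), g p r) := by
        refine tsum_congr fun p => ?_
        rw [tsum_eq_sum (s := Finset.range (2 ^ p)) fun r hr => if_neg hr,
          ENNReal.ofReal_sum_of_nonneg fun r _ => hg0 p r]
        exact Finset.sum_congr rfl fun r hr => if_pos hr
    _ ≤ ENNReal.ofReal (21870 * n ^ 3 * M ^ 2 * (2 : ℝ) ^ jJ) := by
        refine ENNReal.tsum_le_of_sum_range_le fun N => ?_
        rw [← ENNReal.ofReal_sum_of_nonneg fun p _ => Finset.sum_nonneg fun r _ => hg0 p r]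
        exact ENNReal.ofReal_le_ofReal (sum_jonesBeta_le hn hM hA jJ mJ N)
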